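/- Let p be a prime. There exists a sequence (a_n)_{n ≥ 2} with a_n ∈ LocallyConstant (V_n × V_n) (ZMod p) such that there is NO sequence (b_n)_{n ≥ 2} with b_n ∈ LocallyConstant V_n (ZMod p) satisfying a_n(x, r) − a_n(x, s) = b_n(x) − b_{n+1}(x) for all n ≥ 2 and all x ∈ V_n. (This is the concrete content of the theorem that the embeddings F_r, F_s : V_n ↪ V_n × V_n at parameters r and s induce different maps on the lim¹ term of first Čech/Alexander–Spanier cohomology of T × T, so the homotopy axiom fails with the locally compact connected parameter space T in place of [0,1].) -/

import Mathlib

open Real Set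

/-- The deleted topologist's sine curve `T`. -/
def T : Set (ℝ × ℝ) :=
  {p : ℝ × ℝ | (0 < p.1 ∧ p.1 ≤ 1 ∧ p.2 = Real.sin (1 / p.1)) ∨
    (p.1 = 0 ∧ -1 ≤ p.2 ∧ p.2 < 0)}

def r : ℝ × ℝ := (0, -1)

noncomputable def s : ℝ × ℝ := (1, Real.sin 1)

def V : Set (ℝ × ℝ) := T ∩ {p : ℝ × ℝ | p.2 < 0}

def Vi (i : ℕ) : Set (ℝ × ℝ) := V ∪ (T ∩ {p : ℝ × ℝ | p.1 > 1 / (i : ℝ)})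

lemma r_mem_T : r ∈ T := Or.inr ⟨rfl, le_refl _, by norm_num [r]⟩

lemma r_mem_Vi (i : ℕ) : r ∈ Vi i := Or.inl ⟨r_mem_T, by norm_num [r]⟩

lemma s_mem_T : s ∈ T := Or.inl ⟨one_pos, le_refl _, by norm_num [s]⟩

lemma s_mem_Vi {i : ℕ} (hi : 2 ≤ i) : s ∈ Vi i := by
  refine Or.inr ⟨s_mem_T, ?_⟩
  have h2 : (1 : ℝ) < i := by exact_mod_cast lt_of_lt_of_le one_lt_two (by exact_mod_cast hi)
  show (1 : ℝ) / (i : ℝ) < s.1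
  rw [show s.1 = 1 from rfl, div_lt_one (by linarith)]
  exact h2

lemma Vi_mono {i j : ℕ} (hi : 1 ≤ i) (hij : i ≤ j) : Vi i ⊆ Vi j := by
  apply Set.union_subset_union_right
  apply Set.inter_subset_inter_right
  intro p hp
  have hi' : (0 : ℝ) < i := by exact_mod_cast hi
  have hij' : (i : ℝ) ≤ j := by exact_mod_cast hij
  exact lt_of_le_of_lt (one_div_le_one_div_of_le hi' hij') hp

/-!
On `Vi (n + 2)` the abscissa `cut n` separates a clopen left part `leftOfCut n`, which contains `r`
but not `s`. Take `a n` to be the constant `g ≠ 0` on `leftOfCut n ×ˢ leftOfCut n` and `0`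
elsewhere; then `a n (x, r) - a n (x, s)` is `g` on `leftOfCut n` and `0` off it. If this were
`b n - b (n + 1)`, the equations would telescope at the `k`-th trough of the sine wave, which lies
to the left of exactly the first `k` cuts. For large `m` the trough is joined to `s` inside
`Vi (m + 2)`, so `b m` takes the same value at both, and `b 0 (trough k) = k • g + b 0 s`. But the
troughs converge to `r`, so `b 0` is eventually constant along them.
-/

lemma isClopen_setOf_lt_of_forall_ne {X α : Type*} [TopologicalSpace X] [TopologicalSpace α]
    [LinearOrder α] [OrderClosedTopology α] {f : X → α} {c : α} (hf : Continuous f)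
    (hc : ∀ x, f x ≠ c) : IsClopen {x | f x < c} := by
  have h_lt_eq_le : {x | f x < c} = {x | f x ≤ c} :=
    Set.ext fun x => ⟨le_of_lt, fun hx => hx.lt_of_ne (hc x)⟩
  exact ⟨h_lt_eq_le ▸ isClosed_le hf continuous_const, isOpen_lt hf continuous_const⟩

lemma locallyConstant_apply_eq_of_isPreconnected {X Y : Type*} [TopologicalSpace X]
    {S C : Set X} (f : LocallyConstant S Y) (hC : IsPreconnected C) (hCS : C ⊆ S) {x y : X}
    (hx : x ∈ C) (hy : y ∈ C) : f ⟨x, hCS hx⟩ = f ⟨y, hCS hy⟩ := by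
  have hC' : IsPreconnected (Subtype.val ⁻¹' C : Set S) := by
    rwa [← Topology.IsInducing.subtypeVal.isPreconnected_image, Subtype.image_preimage_coe,
      inter_eq_right.mpr hCS]
  exact f.isLocallyConstant.apply_eq_of_isPreconnected hC' hx hy

lemma sum_range_eq_sub_of_eq_sub_inclusion {α A : Type*} [AddCommGroup A] {X : ℕ → Set α}
    (hX : Monotone X) {d b : ∀ n, X n → A}
    (hdb : ∀ n x, d n x = b n x - b (n + 1) (inclusion (hX n.le_succ) x))
    {x : α} (hx : x ∈ X 0) (m : ℕ) :
    ∑ i ∈ Finset.range m, d i ⟨x, hX i.zero_le hx⟩ =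
      b 0 ⟨x, hx⟩ - b m ⟨x, hX m.zero_le hx⟩ :=
  (Finset.sum_congr rfl fun i _ => hdb i _).trans
    (Finset.sum_range_sub' (fun i => b i ⟨x, hX i.zero_le hx⟩) m)

lemma monotone_Vi_add_two : Monotone fun n => Vi (n + 2) :=
  fun _ _ hmn => Vi_mono (by lia) (by lia)

lemma s_mem_Vi_add_two (n : ℕ) : s ∈ Vi (n + 2) := s_mem_Vi (Nat.le_add_left 2 n)

lemma isPreconnected_T_inter_lt_fst {c : ℝ} (hc : 0 ≤ c) :
    IsPreconnected (T ∩ {z | c < z.1}) := by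
  have h_graph : T ∩ {z | c < z.1} = (fun t : ℝ => (t, sin (1 / t))) '' Ioc c 1 := by
    ext ⟨t, u⟩
    constructor
    · rintro ⟨⟨-, ht, htu⟩ | ⟨ht, -⟩, hct⟩
      · exact ⟨t, ⟨hct, ht⟩, Prod.ext rfl htu.symm⟩
      · exact absurd (ht ▸ hct) hc.not_gt
    · rintro ⟨t, ⟨hct, ht⟩, ⟨⟩⟩
      exact ⟨Or.inl ⟨hc.trans_lt hct, ht, rfl⟩, hct⟩
  rw [h_graph]
  refine isPreconnected_Ioc.image _ (continuousOn_id.prodMk (continuous_sin.comp_continuousOn ?_))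
  exact continuousOn_const.div continuousOn_id fun t ht => (hc.trans_lt ht.1).ne'

lemma locallyConstant_apply_eq_apply_s {Y : Type*} {N : ℕ} (hN : 2 ≤ N)
    (f : LocallyConstant (Vi N) Y) {z : ℝ × ℝ} (hzT : z ∈ T) (hz : 1 / (N : ℝ) < z.1) :
    f ⟨z, Or.inr ⟨hzT, hz⟩⟩ = f ⟨s, s_mem_Vi hN⟩ := by
  have hs : 1 / (N : ℝ) < s.1 :=
    (div_lt_one (by positivity)).mpr (by exact_mod_cast one_lt_two.trans_le hN)
  exact locallyConstant_apply_eq_of_isPreconnected f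
    (isPreconnected_T_inter_lt_fst (by positivity)) subset_union_right ⟨hzT, hz⟩ ⟨s_mem_T, hs⟩

/-- The abscissa of the `n`-th descending zero of `sin (1 / x)`, counted from the right starting
at `n = 0`. It lies outside the projection of `Vi (n + 2)` and cuts `Vi (n + 2)` in two. -/
noncomputable def cut (n : ℕ) : ℝ := 1 / ((n + 1 : ℕ) * (2 * π))

lemma cut_pos (n : ℕ) : 0 < cut n := by
  unfold cut
  positivity

lemma sin_one_div_cut (n : ℕ) : sin (1 / cut n) = 0 := by
  rw [cut, one_div_one_div, ← mul_assoc]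
  exact_mod_cast sin_nat_mul_pi ((n + 1) * 2)

lemma cut_le_one_div (n : ℕ) : cut n ≤ 1 / (n + 2 : ℕ) := by
  refine one_div_le_one_div_of_le (by positivity) ?_
  push_cast
  nlinarith [pi_gt_three, n.cast_nonneg (α := ℝ)]

lemma fst_ne_cut {n : ℕ} {z : ℝ × ℝ} (hz : z ∈ Vi (n + 2)) : z.1 ≠ cut n := by
  intro hz_cut
  rcases hz with ⟨⟨-, -, hz_sin⟩ | ⟨hz_zero, -⟩, hz_neg⟩ | ⟨-, hz_right⟩
  · rw [hz_cut, sin_one_div_cut] at hz_sin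
    exact hz_neg.ne hz_sin
  · exact (cut_pos n).ne' (hz_cut.symm.trans hz_zero)
  · exact (cut_le_one_div n).not_gt (hz_cut ▸ hz_right)

/-- The part of `Vi (n + 2)` to the left of `cut n`, a clopen set that contains `r` but not `s`. -/
def leftOfCut (n : ℕ) : Set (Vi (n + 2)) := {x | x.1.1 < cut n}

lemma isClopen_leftOfCut (n : ℕ) : IsClopen (leftOfCut n) :=
  isClopen_setOf_lt_of_forall_ne (by fun_prop) fun x => fst_ne_cut x.2

lemma r_mem_leftOfCut (n : ℕ) : ⟨r, r_mem_Vi (n + 2)⟩ ∈ leftOfCut n := cut_pos n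

lemma s_notMem_leftOfCut (n : ℕ) : ⟨s, s_mem_Vi_add_two n⟩ ∉ leftOfCut n := by
  have h_one : (1 : ℝ) / (n + 2 : ℕ) ≤ 1 :=
    div_le_one_of_le₀ (by exact_mod_cast (by lia : 1 ≤ n + 2)) (by positivity)
  exact ((cut_le_one_div n).trans h_one).not_gt

/-- The `k`-th point, counted from the right starting at `k = 0`, at which the sine curve touches
the line `y = -1`. These points lie in every `Vi i` and converge to `r`. -/
noncomputable def trough (k : ℕ) : ℝ × ℝ := (1 / ((k + 1 : ℕ) * (2 * π) - π / 2), -1)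

lemma lt_one_div_trough_fst (k : ℕ) : (k + 1 : ℝ) < 1 / (trough k).1 := by
  rw [trough, one_div_one_div]
  push_cast
  nlinarith [pi_gt_three, k.cast_nonneg (α := ℝ)]

lemma trough_fst_pos (k : ℕ) : 0 < (trough k).1 :=
  one_div_pos.mp (k.cast_add_one_pos.trans (lt_one_div_trough_fst k))

lemma trough_fst_lt_one_div (k : ℕ) : (trough k).1 < 1 / (k + 1) :=
  (lt_one_div k.cast_add_one_pos (trough_fst_pos k)).mp (lt_one_div_trough_fst k)

lemma sin_one_div_trough_fst (k : ℕ) : sin (1 / (trough k).1) = -1 := by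
  rw [trough, one_div_one_div, sin_nat_mul_two_pi_sub, sin_pi_div_two]

lemma trough_mem_V (k : ℕ) : trough k ∈ V := by
  have h_le_one : (trough k).1 ≤ 1 :=
    (trough_fst_lt_one_div k).le.trans (div_le_one_of_le₀ (by simp) k.cast_add_one_pos.le)
  exact ⟨Or.inl ⟨trough_fst_pos k, h_le_one, (sin_one_div_trough_fst k).symm⟩,
    neg_one_lt_zero (R := ℝ)⟩

lemma trough_mem_Vi (k i : ℕ) : trough k ∈ Vi i := Or.inl (trough_mem_V k)

lemma trough_mem_leftOfCut_iff {k n : ℕ} :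
    ⟨trough k, trough_mem_Vi k (n + 2)⟩ ∈ leftOfCut n ↔ n < k := by
  change (trough k).1 < cut n ↔ n < k
  rw [trough, cut, one_div_lt_one_div (one_div_pos.mp (trough_fst_pos k)) (by positivity)]
  constructor <;> intro h
  · by_contra! hkn
    have h_cast : ((k + 1 : ℕ) : ℝ) ≤ (n + 1 : ℕ) := by exact_mod_cast Nat.succ_le_succ hkn
    nlinarith [pi_pos]
  · have h_cast : ((n + 1 : ℕ) : ℝ) + 1 ≤ (k + 1 : ℕ) := by exact_mod_cast Nat.succ_le_succ h
    nlinarith [pi_pos]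

lemma tendsto_trough : Filter.Tendsto trough Filter.atTop (nhds r) := by
  have h_fst : Filter.Tendsto (fun k => (trough k).1) Filter.atTop (nhds 0) :=
    squeeze_zero (fun k => (trough_fst_pos k).le)
      (fun k => (trough_fst_lt_one_div k).le) tendsto_one_div_add_atTop_nhds_zero_nat
  exact h_fst.prodMk_nhds tendsto_const_nhds

lemma exists_apply_trough_succ_eq {Y : Type*} {i : ℕ} (f : LocallyConstant (Vi i) Y) :
    ∃ k, f ⟨trough (k + 1), trough_mem_Vi (k + 1) i⟩ = f ⟨trough k, trough_mem_Vi k i⟩ := by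
  have h_tendsto : Filter.Tendsto (fun k => (⟨trough k, trough_mem_Vi k i⟩ : Vi i)) Filter.atTop
      (nhds ⟨r, r_mem_Vi i⟩) := tendsto_subtype_rng.mpr tendsto_trough
  obtain ⟨K, hK⟩ := Filter.eventually_atTop.mp
    (h_tendsto.eventually (f.isLocallyConstant.eventually_eq _))
  exact ⟨K, (hK (K + 1) K.le_succ).trans (hK K le_rfl).symm⟩

section Coefficients

variable {A : Type*} [AddCommGroup A]

lemma sum_range_indicator_leftOfCut_trough (g : A) {k m : ℕ} (hkm : k ≤ m) :
    ∑ i ∈ Finset.range m,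
      (leftOfCut i).indicator (fun _ => g) ⟨trough k, trough_mem_Vi k (i + 2)⟩ = k • g := by
  have h_filter : (Finset.range m).filter (· < k) = Finset.range k := by
    ext i
    simp only [Finset.mem_filter, Finset.mem_range]
    lia
  classical
  simp only [indicator_apply, trough_mem_leftOfCut_iff]
  rw [← Finset.sum_filter, h_filter, Finset.sum_const, Finset.card_range]

lemma apply_trough_eq_nsmul_add {g : A} {b : ∀ n, LocallyConstant (Vi (n + 2)) A}
    (hb : ∀ n x, (leftOfCut n).indicator (fun _ => g) x =
      b n x - b (n + 1) (inclusion (monotone_Vi_add_two n.le_succ) x)) (k : ℕ) :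
    b 0 ⟨trough k, trough_mem_Vi k 2⟩ = k • g + b 0 ⟨s, s_mem_Vi_add_two 0⟩ := by
  obtain ⟨n, hn⟩ := exists_nat_one_div_lt (trough_fst_pos k)
  let m := n + k
  have h_right : 1 / ((m + 2 : ℕ) : ℝ) < (trough k).1 :=
    (one_div_le_one_div_of_le n.cast_add_one_pos
      (by exact_mod_cast (by lia : n + 1 ≤ m + 2))).trans_lt hn
  have h_joined : b m ⟨trough k, trough_mem_Vi k (m + 2)⟩ = b m ⟨s, s_mem_Vi_add_two m⟩ :=
    locallyConstant_apply_eq_apply_s (by lia) (b m) (trough_mem_V k).1 h_right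
  have h_trough : k • g = b 0 ⟨trough k, _⟩ - b m ⟨trough k, _⟩ :=
    (sum_range_indicator_leftOfCut_trough g (k.le_add_left n)).symm.trans <|
      sum_range_eq_sub_of_eq_sub_inclusion (b := fun n => b n) monotone_Vi_add_two hb
        (trough_mem_Vi k 2) m
  have h_s : 0 = b 0 ⟨s, _⟩ - b m ⟨s, _⟩ :=
    (Finset.sum_eq_zero fun i _ => indicator_of_notMem (s_notMem_leftOfCut i) _).symm.trans <|
      sum_range_eq_sub_of_eq_sub_inclusion (b := fun n => b n) monotone_Vi_add_two hb
        (s_mem_Vi_add_two 0) m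
  rw [h_trough, h_joined, sub_eq_zero.mp h_s.symm, sub_add_cancel]

/-- The sequence witnessing the theorem: the function on `Vi (n + 2) × Vi (n + 2)` equal to `g` on
`leftOfCut n ×ˢ leftOfCut n` and to `0` elsewhere. -/
noncomputable def cornerCochain (g : A) (n : ℕ) :
    LocallyConstant (Vi (n + 2) × Vi (n + 2)) A :=
  (LocallyConstant.const _ g).indicator ((isClopen_leftOfCut n).prod (isClopen_leftOfCut n))

lemma cornerCochain_r_sub_cornerCochain_s (g : A) (n : ℕ) (x : Vi (n + 2)) :
    cornerCochain g n (x, ⟨r, r_mem_Vi (n + 2)⟩) - cornerCochain g n (x, ⟨s, s_mem_Vi_add_two n⟩) =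
      (leftOfCut n).indicator (fun _ => g) x := by
  classical
  simp [cornerCochain, LocallyConstant.indicator_apply, indicator_apply, r_mem_leftOfCut,
    s_notMem_leftOfCut]

end Coefficients

theorem stmt_16_general (A : Type*) [AddCommGroup A] [Nontrivial A] :
    ∃ a : ∀ n : ℕ, LocallyConstant (↥(Vi (n + 2)) × ↥(Vi (n + 2))) A,
      ¬ ∃ b : ∀ n : ℕ, LocallyConstant (Vi (n + 2)) A,
        ∀ (n : ℕ) (x : Vi (n + 2)),
          a n (x, ⟨r, r_mem_Vi (n + 2)⟩) - a n (x, ⟨s, s_mem_Vi_add_two n⟩) =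
            b n x - b (n + 1) (inclusion (monotone_Vi_add_two n.le_succ) x) := by
  obtain ⟨g, hg⟩ := exists_ne (0 : A)
  refine ⟨cornerCochain g, ?_⟩
  rintro ⟨b, hb⟩
  have hb_trough := apply_trough_eq_nsmul_add fun n x =>
    (cornerCochain_r_sub_cornerCochain_s g n x).symm.trans (hb n x)
  obtain ⟨k, hk⟩ := exists_apply_trough_succ_eq (b 0)
  rw [hb_trough, hb_trough, add_left_inj, succ_nsmul, add_eq_left] at hk
  exact hg hk

/-- For a prime `p`, there is a sequence `a` with
`a n ∈ LocallyConstant (Vi (n+2) × Vi (n+2)) (ZMod p)` such that no sequence `b` with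
`b n ∈ LocallyConstant (Vi (n+2)) (ZMod p)` satisfies
`a n (x, r) - a n (x, s) = b n x - b (n+1) x` for all `n` and all `x ∈ Vi (n+2)`:
the embeddings at parameters `r` and `s` induce different maps on the `lim¹` term, so the
homotopy axiom fails for the locally compact connected parameter space `T`. -/
theorem stmt_16 (p : ℕ) (hp : p.Prime) :
    ∃ a : ∀ n : ℕ, LocallyConstant (↥(Vi (n + 2)) × ↥(Vi (n + 2))) (ZMod p),
      ¬ ∃ b : ∀ n : ℕ, LocallyConstant (Vi (n + 2)) (ZMod p),
        ∀ (n : ℕ) (x : Vi (n + 2)),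
          a n (x, ⟨r, r_mem_Vi (n + 2)⟩) - a n (x, ⟨s, s_mem_Vi (by omega)⟩) =
            b n x - b (n + 1) (Set.inclusion (Vi_mono (by omega) (by omega)) x) := by
  have := Fact.mk hp
  exact stmt_16_general (ZMod p)
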